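/- Gaussian limit of averages over near-spherical cells (Lemma): let m ≥ 1, η > 0, M ≥ 0, and f : ℝ^m → [−M, M] a bounded measurable function. Suppose that for each k, P₀^{(k)} ⊆ ℝ^k is a measurable set whose volume V_k equals the volume B_k(k^{1/2} η) of the k-dimensional ball of radius k^{1/2} η, and that Vol( B_k(k^{1/2} η) \ P₀^{(k)} ) / B_k(k^{1/2} η) → 0 as k → ∞. Then lim_{k→∞} (1/V_k) ∫_{P₀^{(k)}} f(τ₁,…,τ_m) dτ = ∫_{ℝ^m} f(τ) (2πη²)^{−m/2} exp(−‖τ‖²/(2η²)) dτ. -/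

import Mathlib

open MeasureTheory Real Filter Topology
open scoped ENNReal NNReal

/-- The volume of the `n`-dimensional Euclidean ball of radius `r`:
`π^{n/2} r^n / Γ(n/2 + 1)`. -/
noncomputable def Bvol (n : ℕ) (r : ℝ) : ℝ :=
  Real.pi ^ ((n : ℝ) / 2) * r ^ n / Real.Gamma ((n : ℝ) / 2 + 1)

/-- The `n`-dimensional Euclidean ball of radius `r` centered at the origin, as a subset of
`ℝ^n` (with the Euclidean norm). -/
def euclBall (n : ℕ) (r : ℝ) : Set (Fin n → ℝ) :=
  {x | ∑ i, (x i) ^ 2 ≤ r ^ 2}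

/-!
Split `ℝ^(m+k)` as `ℝ^m × ℝ^k`. The slice of the ball of radius `R` over `u ∈ ℝ^m` is a
`k`-dimensional ball whose volume is `(1 - ‖u‖² / R²)^(k/2)` times that of radius `R`, so by Fubini
the average over the ball is a weighted average over `ℝ^m` with these weights. For `R² ~ k η²` the
weights converge to `exp (-‖u‖² / (2 η²))` and are dominated by a Gaussian. Dominated convergence,
applied to `f` and to the constant `1`, gives the limit for balls without any asymptotics of the
Gamma function. Replacing the ball by a cell of the same volume changes the average of `f` by at
most `2 M` times the relative volume of the difference.
-/

section Cells

variable {α E : Type*} [MeasurableSpace α] {μ : Measure α} [NormedAddCommGroup E] [NormedSpace ℝ E]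
  {s t : Set α} {F : α → E} {M : ℝ}

lemma norm_setIntegral_sub_setIntegral_le (hs : NullMeasurableSet s μ) (ht : NullMeasurableSet t μ)
    (hμs : μ s ≠ ∞) (hμt : μ t ≠ ∞) (hF : AEStronglyMeasurable F μ) (hM : ∀ᵐ x ∂μ, ‖F x‖ ≤ M) :
    ‖∫ x in s, F x ∂μ - ∫ x in t, F x ∂μ‖ ≤ M * μ.real (s \ t) + M * μ.real (t \ s) := by
  have integrableOn_F {A : Set α} (hA : μ A ≠ ∞) : IntegrableOn F A μ :=
    Measure.integrableOn_of_bounded hA hF (ae_restrict_of_ae hM)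
  have norm_integral_le {A B : Set α} (hA : μ A ≠ ∞) :
      ‖∫ x in A \ B, F x ∂μ‖ ≤ M * μ.real (A \ B) :=
    norm_setIntegral_le_of_norm_le_const_ae (measure_lt_top_of_subset Set.sdiff_subset hA)
      (ae_restrict_of_ae hM)
  rw [← integral_inter_add_sdiff₀ ht (integrableOn_F hμs),
    ← integral_inter_add_sdiff₀ hs (integrableOn_F hμt), Set.inter_comm t s,
    add_sub_add_left_eq_sub]
  exact norm_sub_le_of_le (norm_integral_le hμs) (norm_integral_le hμt)

lemma norm_setAverage_sub_setAverage_le (hs : NullMeasurableSet s μ) (ht : NullMeasurableSet t μ)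
    (hst : μ s = μ t) (hμt : μ t ≠ ∞) (hF : AEStronglyMeasurable F μ)
    (hM : ∀ᵐ x ∂μ, ‖F x‖ ≤ M) :
    ‖⨍ x in s, F x ∂μ - ⨍ x in t, F x ∂μ‖ ≤ 2 * M * (μ.real (t \ s) / μ.real t) := by
  have real_eq : μ.real s = μ.real t := congrArg ENNReal.toReal hst
  have real_sdiff_eq : μ.real (s \ t) = μ.real (t \ s) :=
    congrArg ENNReal.toReal
      (measure_sdiff_symm hs ht hst (measure_ne_top_of_subset Set.inter_subset_right hμt))
  have integral_bound := norm_setIntegral_sub_setIntegral_le hs ht (hst ▸ hμt) hμt hF hM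
  rw [setAverage_eq, setAverage_eq, real_eq, ← smul_sub, norm_smul, norm_inv,
    Real.norm_of_nonneg measureReal_nonneg]
  calc (μ.real t)⁻¹ * ‖∫ x in s, F x ∂μ - ∫ x in t, F x ∂μ‖
      ≤ (μ.real t)⁻¹ * (M * μ.real (s \ t) + M * μ.real (t \ s)) := by gcongr
    _ = 2 * M * (μ.real (t \ s) / μ.real t) := by rw [real_sdiff_eq]; ring

end Cells

section BallVolume

lemma measurableSet_euclBall (n : ℕ) (r : ℝ) : MeasurableSet (euclBall n r) :=
  measurableSet_le (by fun_prop) measurable_const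

lemma Bvol_pos (n : ℕ) {r : ℝ} (hr : 0 < r) : 0 < Bvol n r := by
  have := Real.Gamma_pos_of_pos (show (0 : ℝ) < (n : ℝ) / 2 + 1 by positivity)
  unfold Bvol
  positivity

lemma Bvol_nonneg (n : ℕ) {r : ℝ} (hr : 0 ≤ r) : 0 ≤ Bvol n r := by
  have := Real.Gamma_pos_of_pos (show (0 : ℝ) < (n : ℝ) / 2 + 1 by positivity)
  unfold Bvol
  positivity

lemma Bvol_mul (n : ℕ) (r c : ℝ) : Bvol n (r * c) = Bvol n r * c ^ n := by
  unfold Bvol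
  ring

lemma toLp_preimage_closedBall (n : ℕ) {r : ℝ} (hr : 0 ≤ r) :
    (@WithLp.toLp 2 (Fin n → ℝ)) ⁻¹' Metric.closedBall 0 r = euclBall n r := by
  ext x
  simp only [Set.mem_preimage, Metric.mem_closedBall, dist_zero_right, euclBall,
    Set.mem_ofPred_eq, EuclideanSpace.norm_eq, Real.norm_eq_abs, sq_abs]
  exact Real.sqrt_le_left hr

lemma volume_euclBall (n : ℕ) {r : ℝ} (hr : 0 ≤ r) :
    volume (euclBall n r) = ENNReal.ofReal (Bvol n r) := by
  rcases n.eq_zero_or_pos with rfl | hn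
  · simp [euclBall, Bvol, volume_pi, sq_nonneg]
  have : Nonempty (Fin n) := ⟨⟨0, hn⟩⟩
  rw [← toLp_preimage_closedBall n hr, (PiLp.volume_preserving_toLp (Fin n)).measure_preimage
    measurableSet_closedBall.nullMeasurableSet, EuclideanSpace.volume_closedBall, Fintype.card_fin,
    ← ENNReal.ofReal_pow hr, ← ENNReal.ofReal_mul (by positivity), Bvol,
    Real.rpow_div_two_eq_sqrt _ pi_pos.le, Real.rpow_natCast]
  ring_nf

lemma volume_euclBall_ne_top (n : ℕ) {r : ℝ} (hr : 0 ≤ r) : volume (euclBall n r) ≠ ∞ :=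
  volume_euclBall n hr ▸ ENNReal.ofReal_ne_top

lemma volume_real_euclBall (n : ℕ) {r : ℝ} (hr : 0 ≤ r) :
    volume.real (euclBall n r) = Bvol n r := by
  rw [Measure.real, volume_euclBall n hr, ENNReal.toReal_ofReal (Bvol_nonneg n hr)]

lemma volume_eq_volume_euclBall {n : ℕ} {r : ℝ} (hr : 0 < r) {s : Set (Fin n → ℝ)}
    (hs : volume.real s = Bvol n r) : volume s = volume (euclBall n r) := by
  have volume_s_ne_top : volume s ≠ ∞ := fun h =>
    (Bvol_pos n hr).ne' (by rw [← hs, Measure.real, h, ENNReal.toReal_top])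
  rw [volume_euclBall n hr.le, ← hs, ofReal_measureReal volume_s_ne_top]

end BallVolume

section Slices

variable {ι : Type*} [Fintype ι]

/-- The volume of the slice `{v ∈ ℝ^k | ‖u‖² + ‖v‖² ≤ R²}` relative to that of the `k`-dimensional
ball of radius `R`: up to normalization, the density of the marginal on `ι → ℝ` of the uniform
distribution on a ball. It vanishes for `‖u‖ > R` because `√` does on negative numbers, provided
`k ≠ 0`. -/
noncomputable def ballSliceRatio (k : ℕ) (R : ℝ) (u : ι → ℝ) : ℝ :=
  √(1 - (∑ i, (u i) ^ 2) / R ^ 2) ^ k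

lemma ballSliceRatio_nonneg (k : ℕ) (R : ℝ) (u : ι → ℝ) : 0 ≤ ballSliceRatio k R u :=
  pow_nonneg (Real.sqrt_nonneg _) k

lemma measurable_ballSliceRatio (k : ℕ) (R : ℝ) :
    Measurable (ballSliceRatio k R : (ι → ℝ) → ℝ) := by
  unfold ballSliceRatio
  fun_prop

lemma volume_real_ball_slice {k : ℕ} (hk : k ≠ 0) {R : ℝ} (hR : 0 < R) (u : ι → ℝ) :
    volume.real {v : Fin k → ℝ | ∑ i, (u i) ^ 2 + ∑ j, (v j) ^ 2 ≤ R ^ 2} =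
      Bvol k R * ballSliceRatio k R u := by
  set t := ∑ i, (u i) ^ 2
  rcases le_or_gt t (R ^ 2) with ht | ht
  · have slice_eq : {v : Fin k → ℝ | t + ∑ j, (v j) ^ 2 ≤ R ^ 2} =
        euclBall k (R * √(1 - t / R ^ 2)) := by
      have radius_sq : (R * √(1 - t / R ^ 2)) ^ 2 = R ^ 2 - t := by
        rw [mul_pow, Real.sq_sqrt (sub_nonneg.2 (div_le_one_of_le₀ ht (sq_nonneg R)))]
        field_simp
      simp only [euclBall, radius_sq, le_sub_iff_add_le']
    rw [slice_eq, volume_real_euclBall k (by positivity), Bvol_mul, ballSliceRatio]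
  · have slice_eq_empty : {v : Fin k → ℝ | t + ∑ j, (v j) ^ 2 ≤ R ^ 2} = ∅ :=
      Set.eq_empty_of_forall_notMem fun v hv =>
        (ht.trans_le (le_add_of_nonneg_right (by positivity))).not_ge hv
    have ratio_eq_zero : ballSliceRatio k R u = 0 := by
      have : 1 - t / R ^ 2 ≤ 0 := sub_nonpos.2 ((one_le_div (by positivity)).2 ht.le)
      rw [ballSliceRatio, Real.sqrt_eq_zero_of_nonpos this, zero_pow hk]
    rw [slice_eq_empty, ratio_eq_zero, measureReal_empty, mul_zero]

variable {E : Type*} [NormedAddCommGroup E] [NormedSpace ℝ E]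

lemma setIntegral_prod_comp_fst [CompleteSpace E] {α β : Type*} [MeasurableSpace α]
    [MeasurableSpace β] {μ : Measure α} {ν : Measure β} [SFinite μ] [SFinite ν] {s : Set (α × β)}
    (hs : MeasurableSet s) {f : α → E}
    (hf : IntegrableOn (fun p : α × β => f p.1) s (μ.prod ν)) :
    ∫ p in s, f p.1 ∂μ.prod ν = ∫ x, ν.real (Prod.mk x ⁻¹' s) • f x ∂μ := by
  rw [← integral_indicator hs, integral_prod _ (hf.integrable_indicator hs)]
  refine integral_congr_ae (Eventually.of_forall fun x => ?_)
  exact integral_indicator_const (f x) (measurable_prodMk_left hs)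

/-- The splitting of `ℝ^(m+k)` into the first `m` and the last `k` coordinates. -/
def piFinAddEquiv (m k : ℕ) : (Fin (m + k) → ℝ) ≃ᵐ (Fin m → ℝ) × (Fin k → ℝ) :=
  (MeasurableEquiv.piCongrLeft (fun _ => ℝ) finSumFinEquiv).symm.trans
    (MeasurableEquiv.sumPiEquivProdPi fun _ => ℝ)

lemma measurePreserving_piFinAddEquiv (m k : ℕ) : MeasurePreserving (piFinAddEquiv m k) :=
  (volume_measurePreserving_sumPiEquivProdPi fun _ => ℝ).comp
    (volume_measurePreserving_piCongrLeft (fun _ => ℝ) finSumFinEquiv).symm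

lemma quasiMeasurePreserving_comp_castAdd (m k : ℕ) :
    Measure.QuasiMeasurePreserving
      (fun (τ : Fin (m + k) → ℝ) (i : Fin m) => τ (Fin.castAdd k i)) :=
  Measure.quasiMeasurePreserving_fst.comp
    (measurePreserving_piFinAddEquiv m k).quasiMeasurePreserving

lemma euclBall_add_eq_preimage (m k : ℕ) (R : ℝ) :
    euclBall (m + k) R =
      piFinAddEquiv m k ⁻¹' {p | ∑ i, (p.1 i) ^ 2 + ∑ j, (p.2 j) ^ 2 ≤ R ^ 2} := by
  ext τ
  simp only [euclBall, Set.mem_ofPred_eq, Fin.sum_univ_add]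
  rfl

variable [CompleteSpace E] {m k : ℕ} {R M : ℝ} {f : (Fin m → ℝ) → E}

lemma setIntegral_euclBall_comp_castAdd (hk : k ≠ 0) (hR : 0 < R) (hf : AEStronglyMeasurable f)
    (hM : ∀ᵐ u, ‖f u‖ ≤ M) :
    ∫ τ in euclBall (m + k) R, f (fun i => τ (Fin.castAdd k i)) =
      Bvol k R • ∫ u, ballSliceRatio k R u • f u := by
  have splitting := measurePreserving_piFinAddEquiv m k
  have emb := (piFinAddEquiv m k).measurableEmbedding
  set B : Set ((Fin m → ℝ) × (Fin k → ℝ)) :=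
    {p | ∑ i, (p.1 i) ^ 2 + ∑ j, (p.2 j) ^ 2 ≤ R ^ 2}
  have measurableSet_B : MeasurableSet B := measurableSet_le (by fun_prop) measurable_const
  have volume_B_ne_top : volume B ≠ ∞ := by
    rw [← splitting.measure_preimage_emb emb, ← euclBall_add_eq_preimage]
    exact volume_euclBall_ne_top _ hR.le
  have integrableOn_B : IntegrableOn (fun p : (Fin m → ℝ) × (Fin k → ℝ) => f p.1) B :=
    Measure.integrableOn_of_bounded volume_B_ne_top hf.comp_fst
      (ae_restrict_of_ae (Measure.quasiMeasurePreserving_fst.ae hM))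
  calc ∫ τ in euclBall (m + k) R, f (fun i => τ (Fin.castAdd k i))
      = ∫ p in B, f p.1 := by
        rw [euclBall_add_eq_preimage]
        exact splitting.setIntegral_preimage_emb emb (fun p => f p.1) B
    _ = ∫ u, volume.real (Prod.mk u ⁻¹' B) • f u :=
        setIntegral_prod_comp_fst measurableSet_B integrableOn_B
    _ = ∫ u, (Bvol k R * ballSliceRatio k R u) • f u :=
        integral_congr_ae (Eventually.of_forall fun u =>
          congrArg (· • f u) (volume_real_ball_slice hk hR u))
    _ = Bvol k R • ∫ u, ballSliceRatio k R u • f u := by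
        simp only [mul_smul, integral_smul]

lemma setAverage_euclBall_comp_castAdd (hk : k ≠ 0) (hR : 0 < R) (hf : AEStronglyMeasurable f)
    (hM : ∀ᵐ u, ‖f u‖ ≤ M) :
    ⨍ τ in euclBall (m + k) R, f (fun i => τ (Fin.castAdd k i)) =
      (∫ u : Fin m → ℝ, ballSliceRatio k R u)⁻¹ • ∫ u, ballSliceRatio k R u • f u := by
  have volume_eq : volume.real (euclBall (m + k) R) =
      Bvol k R * ∫ u : Fin m → ℝ, ballSliceRatio k R u := by
    simpa using setIntegral_euclBall_comp_castAdd (m := m) (f := fun _ => (1 : ℝ)) (M := 1) hk hR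
      aestronglyMeasurable_const (by simp)
  rw [setAverage_eq, volume_eq, setIntegral_euclBall_comp_castAdd hk hR hf hM, smul_smul, mul_inv,
    mul_right_comm, inv_mul_cancel₀ (Bvol_pos k hR).ne', one_mul]

end Slices

section GaussianIntegral

variable {ι : Type*} [Fintype ι]

lemma exp_neg_mul_sum_sq (b : ℝ) (u : ι → ℝ) :
    exp (-b * ∑ i, (u i) ^ 2) = ∏ i, exp (-b * (u i) ^ 2) := by
  rw [Finset.mul_sum, Real.exp_sum]

lemma integrable_exp_neg_mul_sum_sq {b : ℝ} (hb : 0 < b) :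
    Integrable (fun u : ι → ℝ => exp (-b * ∑ i, (u i) ^ 2)) := by
  simp only [exp_neg_mul_sum_sq]
  exact Integrable.fintype_prod fun _ => integrable_exp_neg_mul_sq hb

lemma integral_exp_neg_mul_sum_sq (b : ℝ) :
    ∫ u : ι → ℝ, exp (-b * ∑ i, (u i) ^ 2) = √(π / b) ^ Fintype.card ι := by
  simp only [exp_neg_mul_sum_sq]
  rw [integral_fintype_prod_volume_eq_pow fun x : ℝ => exp (-b * x ^ 2), integral_gaussian]

end GaussianIntegral

section Limit

lemma sqrt_one_sub_pow_le_exp (x : ℝ) (k : ℕ) : √(1 - x) ^ k ≤ exp (-(k * x / 2)) := by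
  have sqrt_le : √(1 - x) ≤ exp (-x / 2) := by
    rw [Real.exp_half]
    exact Real.sqrt_le_sqrt (Real.one_sub_le_exp_neg x)
  calc √(1 - x) ^ k ≤ exp (-x / 2) ^ k := by gcongr
    _ = exp (-(k * x / 2)) := by rw [← Real.exp_nat_mul]; ring_nf

lemma tendsto_sqrt_one_sub_pow_exp {x : ℕ → ℝ} {c : ℝ}
    (hx : Tendsto (fun k : ℕ => k * x k) atTop (𝓝 c)) :
    Tendsto (fun k : ℕ => √(1 - x k) ^ k) atTop (𝓝 (exp (-(c / 2)))) := by
  have x_tendsto_zero : Tendsto x atTop (𝓝 0) := by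
    refine (hx.div_atTop tendsto_natCast_atTop_atTop).congr' ?_
    filter_upwards [eventually_ne_atTop 0] with k hk
    field_simp
  have pow_tendsto : Tendsto (fun k : ℕ => √((1 - x k) ^ k)) atTop (𝓝 (exp (-(c / 2)))) := by
    rw [← neg_div, Real.exp_half]
    refine Tendsto.sqrt ?_
    simpa only [sub_eq_add_neg] using
      Real.tendsto_one_add_pow_exp_of_tendsto (g := fun k => -x k) (by simpa using hx.neg)
  refine pow_tendsto.congr' ?_
  filter_upwards [x_tendsto_zero.eventually_le_const one_pos] with k hk
  rw [Real.sqrt_eq_iff_mul_self_eq (pow_nonneg (sub_nonneg.2 hk) k) (by positivity), ← mul_pow,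
    Real.mul_self_sqrt (sub_nonneg.2 hk)]

variable {ι : Type*} [Fintype ι] {E : Type*} [NormedAddCommGroup E] [NormedSpace ℝ E]
  {R : ℕ → ℝ} {a M : ℝ}

lemma tendsto_ballSliceRatio (hRa : Tendsto (fun k : ℕ => k / R k ^ 2) atTop (𝓝 a))
    (u : ι → ℝ) :
    Tendsto (fun k => ballSliceRatio k (R k) u) atTop
      (𝓝 (exp (-(a / 2) * ∑ i, (u i) ^ 2))) := by
  rw [show -(a / 2) * ∑ i, (u i) ^ 2 = -(a * (∑ i, (u i) ^ 2) / 2) by ring]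
  exact tendsto_sqrt_one_sub_pow_exp
    ((hRa.mul_const (∑ i, (u i) ^ 2)).congr fun k => by ring)

lemma ballSliceRatio_le_exp {k : ℕ} {r b : ℝ} (hb : b ≤ k / r ^ 2) (u : ι → ℝ) :
    ballSliceRatio k r u ≤ exp (-(b / 2) * ∑ i, (u i) ^ 2) := by
  refine (sqrt_one_sub_pow_le_exp _ k).trans (Real.exp_le_exp.2 ?_)
  have : b * ∑ i, (u i) ^ 2 ≤ k / r ^ 2 * ∑ i, (u i) ^ 2 := by gcongr
  linarith [show (k : ℝ) * ((∑ i, (u i) ^ 2) / r ^ 2) = k / r ^ 2 * ∑ i, (u i) ^ 2 by ring]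

lemma tendsto_integral_ballSliceRatio_smul (ha : 0 < a)
    (hRa : Tendsto (fun k : ℕ => k / R k ^ 2) atTop (𝓝 a)) {f : (ι → ℝ) → E}
    (hf : AEStronglyMeasurable f) (hM : ∀ᵐ u, ‖f u‖ ≤ M) :
    Tendsto (fun k => ∫ u, ballSliceRatio k (R k) u • f u) atTop
      (𝓝 (∫ u, exp (-(a / 2) * ∑ i, (u i) ^ 2) • f u)) := by
  refine tendsto_integral_filter_of_dominated_convergence
    (fun u => exp (-(a / 2 / 2) * ∑ i, (u i) ^ 2) * M) ?_ ?_
    ((integrable_exp_neg_mul_sum_sq (by positivity)).mul_const M)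
    (Eventually.of_forall fun u => (tendsto_ballSliceRatio hRa u).smul_const (f u))
  · exact Eventually.of_forall fun k => (measurable_ballSliceRatio k _).aestronglyMeasurable.smul hf
  · filter_upwards [hRa.eventually_const_le (half_lt_self ha)] with k hk
    filter_upwards [hM] with u hu
    rw [norm_smul, Real.norm_of_nonneg (ballSliceRatio_nonneg k _ u)]
    exact mul_le_mul (ballSliceRatio_le_exp hk u) hu (norm_nonneg _) (Real.exp_nonneg _)

lemma tendsto_setAverage_euclBall [CompleteSpace E] {m : ℕ} (ha : 0 < a)
    (hR : ∀ᶠ k in atTop, 0 < R k) (hRa : Tendsto (fun k : ℕ => k / R k ^ 2) atTop (𝓝 a))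
    {f : (Fin m → ℝ) → E} (hf : AEStronglyMeasurable f) (hM : ∀ᵐ u, ‖f u‖ ≤ M) :
    Tendsto (fun k => ⨍ τ in euclBall (m + k) (R k), f (fun i => τ (Fin.castAdd k i))) atTop
      (𝓝 ((√(2 * π / a) ^ m)⁻¹ • ∫ u, exp (-(a / 2) * ∑ i, (u i) ^ 2) • f u)) := by
  have normalization_tendsto : Tendsto (fun k => ∫ u : Fin m → ℝ, ballSliceRatio k (R k) u) atTop
      (𝓝 (√(2 * π / a) ^ m)) := by
    have := tendsto_integral_ballSliceRatio_smul (f := fun _ : Fin m → ℝ => (1 : ℝ)) (M := 1) ha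
      hRa aestronglyMeasurable_const (by simp)
    simp only [smul_eq_mul, mul_one, integral_exp_neg_mul_sum_sq, Fintype.card_fin] at this
    rwa [show π / (a / 2) = 2 * π / a by field_simp] at this
  have normalization_ne_zero : √(2 * π / a) ^ m ≠ 0 := by positivity
  refine ((normalization_tendsto.inv₀ normalization_ne_zero).smul
    (tendsto_integral_ballSliceRatio_smul ha hRa hf hM)).congr' ?_
  filter_upwards [hR, eventually_ne_atTop 0] with k hRk hk
  exact (setAverage_euclBall_comp_castAdd hk hRk hf hM).symm

lemma tendsto_natCast_div_sqrt_add_mul_sq (m : ℕ) (η : ℝ) :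
    Tendsto (fun k : ℕ => (k : ℝ) / (√((m + k : ℕ) : ℝ) * η) ^ 2) atTop (𝓝 (1 / η ^ 2)) := by
  refine ((tendsto_natCast_div_add_atTop (m : ℝ)).div_const (η ^ 2)).congr fun k => ?_
  rw [mul_pow, Real.sq_sqrt (Nat.cast_nonneg _), div_div, Nat.cast_add, add_comm (m : ℝ)]

lemma inv_sqrt_pow_smul_integral_exp (m : ℕ) (η : ℝ) (f : (Fin m → ℝ) → E) :
    (√(2 * π / (1 / η ^ 2)) ^ m)⁻¹ • ∫ u, exp (-(1 / η ^ 2 / 2) * ∑ i, (u i) ^ 2) • f u =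
      ∫ u, ((2 * π * η ^ 2) ^ (-(m : ℝ) / 2) * exp (-(∑ i, (u i) ^ 2) / (2 * η ^ 2))) • f u := by
  rw [← integral_smul, div_div_eq_mul_div, div_one, neg_div, Real.rpow_neg (by positivity),
    Real.rpow_div_two_eq_sqrt _ (by positivity), Real.rpow_natCast]
  simp only [smul_smul]
  ring_nf

end Limit

theorem cell_average_gaussian_limit_general {E : Type*} [NormedAddCommGroup E] [NormedSpace ℝ E]
    [CompleteSpace E] {m : ℕ} {η M : ℝ} (hη : 0 < η) {f : (Fin m → ℝ) → E}
    (hf : AEStronglyMeasurable f) (hM : ∀ᵐ u, ‖f u‖ ≤ M) {P : (k : ℕ) → Set (Fin k → ℝ)}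
    (hP : ∀ k, NullMeasurableSet (P k))
    (hPvol : ∀ k, volume.real (P k) = Bvol k (√k * η))
    (hPdiff : Tendsto (fun k : ℕ => volume.real (euclBall k (√k * η) \ P k) / Bvol k (√k * η))
      atTop (𝓝 0)) :
    Tendsto (fun k => ⨍ τ in P (m + k), f (fun i => τ (Fin.castAdd k i))) atTop
      (𝓝 (∫ u, ((2 * π * η ^ 2) ^ (-(m : ℝ) / 2) *
        exp (-(∑ i, (u i) ^ 2) / (2 * η ^ 2))) • f u)) := by
  have radius_pos : ∀ᶠ k : ℕ in atTop, 0 < √((m + k : ℕ) : ℝ) * η := by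
    filter_upwards [eventually_gt_atTop 0] with k hk
    positivity
  have ball_limit := tendsto_setAverage_euclBall (by positivity) radius_pos
    (tendsto_natCast_div_sqrt_add_mul_sq m η) hf hM
  rw [inv_sqrt_pow_smul_integral_exp m η] at ball_limit
  have add_tendsto_atTop : Tendsto (m + ·) atTop atTop :=
    tendsto_atTop_mono (fun k => Nat.le_add_left k m) tendsto_id
  have error_bound_tendsto := (hPdiff.comp add_tendsto_atTop).const_mul (2 * M)
  rw [mul_zero] at error_bound_tendsto
  refine ball_limit.congr_dist (squeeze_zero' (Eventually.of_forall fun _ => dist_nonneg) ?_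
    error_bound_tendsto)
  filter_upwards [radius_pos] with k hk
  have projection := quasiMeasurePreserving_comp_castAdd m k
  rw [dist_comm, dist_eq_norm, Function.comp_apply, ← volume_real_euclBall _ hk.le]
  exact norm_setAverage_sub_setAverage_le (hP _) (measurableSet_euclBall _ _).nullMeasurableSet
    (volume_eq_volume_euclBall hk (hPvol _)) (volume_euclBall_ne_top _ hk.le)
    (hf.comp_quasiMeasurePreserving projection) (projection.ae hM)

/-- Gaussian limit of averages over near-spherical cells.  Let `P₀^{(k)} ⊆ ℝ^k` be
measurable sets whose volume equals that of the `k`-dimensional ball of radius `√k · η` and whose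
relative symmetric difference with that ball vanishes as `k → ∞`.  Then for any bounded
measurable `f : ℝ^m → [−M, M]`, the average of `f(τ₁, …, τ_m)` over `P₀^{(k)}` converges to the
integral of `f` against the i.i.d. `N(0, η²)` Gaussian density on `ℝ^m`. -/
theorem cell_average_gaussian_limit {m : ℕ} (hm : 1 ≤ m) (η : ℝ) (hη : 0 < η)
    (M : ℝ) (hM : 0 ≤ M) (f : (Fin m → ℝ) → ℝ) (hfm : Measurable f) (hfb : ∀ x, |f x| ≤ M)
    (Pc : (k : ℕ) → Set (Fin k → ℝ)) (hPm : ∀ k, MeasurableSet (Pc k))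
    (hPvol : ∀ k, (volume (Pc k)).toReal = Bvol k (Real.sqrt k * η))
    (hPdiff : Tendsto
      (fun k : ℕ => (volume (euclBall k (Real.sqrt k * η) \ Pc k)).toReal /
        Bvol k (Real.sqrt k * η)) atTop (𝓝 0)) :
    Tendsto
      (fun k : ℕ =>
        ((volume (Pc (m + k))).toReal)⁻¹ *
          ∫ τ in Pc (m + k), f (fun i => τ (Fin.castLE (Nat.le_add_right m k) i)))
      atTop
      (𝓝 (∫ u : Fin m → ℝ, f u * ((2 * Real.pi * η ^ 2) ^ (-(m : ℝ) / 2) *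
        Real.exp (-(∑ i, (u i) ^ 2) / (2 * η ^ 2))))) := by
  simpa only [setAverage_eq, smul_eq_mul, mul_comm (f _)] using! cell_average_gaussian_limit_general
    hη hfm.aestronglyMeasurable (.of_forall hfb) (fun k => (hPm k).nullMeasurableSet) hPvol hPdiff
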